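/- Define the time-T value functions J_T^1(π¹, u²) := min_{u¹ ∈ 𝒰_T^1} c̃_T^1(π¹, u¹, u²) and J_T^2(π²) := min_{u² ∈ 𝒰_T^2} E^{(g,ψ^2)}[J_T^1(Π_T^1, u²) | Π_T^2 = π², U_T^2 = u²]. Then: (1) for every admissible team strategy g of the structural form U_t^1 = g_t^1(Π_t^1, Π_t^2), U_t^2 = g_t^2(Π_t^2), the terminal cost satisfies 𝒥_T(g) ≥ E^{(g,ψ^2)}[J_T^2(Π_T^2)]; and (2) with g_T^{*1} the argmin law for agent 1 and g_T^{*2}(π²) ∈ argmin_{u²} E[J_T^1(Π_T^1, u²) | π², u²], equality holds: 𝒥_T(g_{0:T−1}, g_T^{*1}, g_T^{*2}) = E^{(g,ψ^2)}[J_T^2(Π_T^2)]. -/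

import Mathlib

/-!
Common framework: a two-agent sequential dynamic team with nested information
structure (Dave & Malikopoulos, "Structural results for decentralized
stochastic control with a nested information structure").

* `X t` : state space at time `t`; `U1 t`, `U2 t` : action spaces of agents 1 and 2;
* `W t` : disturbance; `V1 t`, `V2 t` : measurement noises; `Y1 t`, `Y2 t` : observations.
* Dynamics `X_{t+1} = f t X_t U¹_t U²_t W_t`, observations `Y^k_t = h^k t X_t V^k_t`.
* Memories `M²_t = (Y²_{0:t}, U²_{0:t-1})`, `L_t^{[1,2]} = (Y¹_{0:t}, U¹_{0:t-1})`,
  `M¹_t = (L_t^{[1,2]}, M²_t)` (nested information).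
* The primitive random variables are independent with given PMFs; the sample
  space for horizon `T` is `ΩT`, with the product mass function `mass`.
-/

open scoped Classical
open Finset

namespace NestedTeam

noncomputable section

/-- Memory of agent 2 at time `t`: observations `Y²₀,…,Y²ₜ` and actions `U²₀,…,U²ₜ₋₁`. -/
abbrev M2 (Y2 U2 : ℕ → Type) (t : ℕ) : Type :=
  ((s : Fin (t + 1)) → Y2 s) × ((s : Fin t) → U2 s)

/-- The private information `L_t^{[1,2]} = M¹_t \ M²_t` of agent 1. -/
abbrev Lp (Y1 U1 : ℕ → Type) (t : ℕ) : Type :=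
  ((s : Fin (t + 1)) → Y1 s) × ((s : Fin t) → U1 s)

/-- Memory of agent 1 at time `t` (nested information: it contains `M²_t`). -/
abbrev M1 (Y1 Y2 U1 U2 : ℕ → Type) (t : ℕ) : Type :=
  Lp Y1 U1 t × M2 Y2 U2 t

/-- The system: dynamics, observation maps and per-stage cost. -/
structure Sys (X U1 U2 W V1 V2 Y1 Y2 : ℕ → Type) where
  f : ∀ t, X t → U1 t → U2 t → W t → X (t + 1)
  h1 : ∀ t, X t → V1 t → Y1 t
  h2 : ∀ t, X t → V2 t → Y2 t
  c : ∀ t, X t → U1 t → U2 t → ℝ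

/-- A control strategy profile: `U¹_t = g1 t M¹_t`, `U²_t = g2 t M²_t`. -/
structure Strat (U1 U2 Y1 Y2 : ℕ → Type) where
  g1 : ∀ t, M1 Y1 Y2 U1 U2 t → U1 t
  g2 : ∀ t, M2 Y2 U2 t → U2 t

/-- A realization of the primitive random variables. -/
structure Prim (X W V1 V2 : ℕ → Type) where
  x0 : X 0
  w : ∀ t, W t
  v1 : ∀ t, V1 t
  v2 : ∀ t, V2 t

variable {X U1 U2 W V1 V2 Y1 Y2 : ℕ → Type}

/-- The closed-loop trajectory: states `X_{0:t}` and actions `U^{1:2}_{0:t-1}`. -/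
def hist (S : Sys X U1 U2 W V1 V2 Y1 Y2) (g : Strat U1 U2 Y1 Y2) (ρ : Prim X W V1 V2) :
    (t : ℕ) → ((s : Fin (t + 1)) → X s) × ((s : Fin t) → U1 s × U2 s)
  | 0 => (Fin.cons (α := fun s : Fin 1 => X s) ρ.x0 (fun i => i.elim0), fun i => i.elim0)
  | t + 1 =>
    let p := hist S g ρ t
    let y1 : (s : Fin (t + 1)) → Y1 s := fun s => S.h1 s (p.1 s) (ρ.v1 s)
    let y2 : (s : Fin (t + 1)) → Y2 s := fun s => S.h2 s (p.1 s) (ρ.v2 s)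
    let m1 : M1 Y1 Y2 U1 U2 t := ((y1, fun s => (p.2 s).1), (y2, fun s => (p.2 s).2))
    let a1 := g.g1 t m1
    let a2 := g.g2 t m1.2
    (Fin.snoc (α := fun s : Fin (t + 2) => X s) p.1 (S.f t (p.1 (Fin.last t)) a1 a2 (ρ.w t)),
     Fin.snoc (α := fun s : Fin (t + 1) => U1 s × U2 s) p.2 (a1, a2))

/-- State `X_t` along the closed loop. -/
def xTraj (S : Sys X U1 U2 W V1 V2 Y1 Y2) (g : Strat U1 U2 Y1 Y2) (ρ : Prim X W V1 V2)
    (t : ℕ) : X t := (hist S g ρ t).1 (Fin.last t)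

/-- `L_t^{[1,2]} = (Y¹_{0:t}, U¹_{0:t-1})` along the closed loop. -/
def lpTraj (S : Sys X U1 U2 W V1 V2 Y1 Y2) (g : Strat U1 U2 Y1 Y2) (ρ : Prim X W V1 V2)
    (t : ℕ) : Lp Y1 U1 t :=
  (fun s => S.h1 s ((hist S g ρ t).1 s) (ρ.v1 s), fun s => ((hist S g ρ t).2 s).1)

/-- `M²_t = (Y²_{0:t}, U²_{0:t-1})` along the closed loop. -/
def m2Traj (S : Sys X U1 U2 W V1 V2 Y1 Y2) (g : Strat U1 U2 Y1 Y2) (ρ : Prim X W V1 V2)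
    (t : ℕ) : M2 Y2 U2 t :=
  (fun s => S.h2 s ((hist S g ρ t).1 s) (ρ.v2 s), fun s => ((hist S g ρ t).2 s).2)

/-- `M¹_t` along the closed loop. -/
def m1Traj (S : Sys X U1 U2 W V1 V2 Y1 Y2) (g : Strat U1 U2 Y1 Y2) (ρ : Prim X W V1 V2)
    (t : ℕ) : M1 Y1 Y2 U1 U2 t := (lpTraj S g ρ t, m2Traj S g ρ t)

/-- Action `U¹_t` along the closed loop. -/
def u1Traj (S : Sys X U1 U2 W V1 V2 Y1 Y2) (g : Strat U1 U2 Y1 Y2) (ρ : Prim X W V1 V2)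
    (t : ℕ) : U1 t := g.g1 t (m1Traj S g ρ t)

/-- Action `U²_t` along the closed loop. -/
def u2Traj (S : Sys X U1 U2 W V1 V2 Y1 Y2) (g : Strat U1 U2 Y1 Y2) (ρ : Prim X W V1 V2)
    (t : ℕ) : U2 t := g.g2 t (m2Traj S g ρ t)

/-- Observation `Y¹_t` along the closed loop. -/
def y1Traj (S : Sys X U1 U2 W V1 V2 Y1 Y2) (g : Strat U1 U2 Y1 Y2) (ρ : Prim X W V1 V2)
    (t : ℕ) : Y1 t := S.h1 t (xTraj S g ρ t) (ρ.v1 t)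

/-- Observation `Y²_t` along the closed loop. -/
def y2Traj (S : Sys X U1 U2 W V1 V2 Y1 Y2) (g : Strat U1 U2 Y1 Y2) (ρ : Prim X W V1 V2)
    (t : ℕ) : Y2 t := S.h2 t (xTraj S g ρ t) (ρ.v2 t)

/-- New information `Z¹_{t+1} = (Y¹_{t+1}, U¹_t, Y²_{t+1}, U²_t)` of agent 1. -/
def z1Traj (S : Sys X U1 U2 W V1 V2 Y1 Y2) (g : Strat U1 U2 Y1 Y2) (ρ : Prim X W V1 V2)
    (t : ℕ) : Y1 (t + 1) × U1 t × Y2 (t + 1) × U2 t :=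
  (y1Traj S g ρ (t + 1), u1Traj S g ρ t, y2Traj S g ρ (t + 1), u2Traj S g ρ t)

/-- New information `Z²_{t+1} = (Y²_{t+1}, U²_t)` of agent 2. -/
def z2Traj (S : Sys X U1 U2 W V1 V2 Y1 Y2) (g : Strat U1 U2 Y1 Y2) (ρ : Prim X W V1 V2)
    (t : ℕ) : Y2 (t + 1) × U2 t := (y2Traj S g ρ (t + 1), u2Traj S g ρ t)

/-- Sample space of primitive random variables for horizon `T`. -/
abbrev ΩT (X W V1 V2 : ℕ → Type) (T : ℕ) : Type :=
  X 0 × ((t : Fin (T + 1)) → W t) × ((t : Fin (T + 1)) → V1 t) × ((t : Fin (T + 1)) → V2 t)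

/-- Extend a finite-horizon family to all times (by junk beyond the horizon). -/
def ext {α : ℕ → Type} [∀ t, Inhabited (α t)] (T : ℕ) (a : (t : Fin (T + 1)) → α t)
    (t : ℕ) : α t := if h : t < T + 1 then a ⟨t, h⟩ else default

/-- The primitive realization corresponding to a sample point. -/
def toPrim [∀ t, Inhabited (W t)] [∀ t, Inhabited (V1 t)] [∀ t, Inhabited (V2 t)]
    (T : ℕ) (ω : ΩT X W V1 V2 T) : Prim X W V1 V2 :=
  ⟨ω.1, ext T ω.2.1, ext T ω.2.2.1, ext T ω.2.2.2⟩

/-- The (known) probability mass functions of the mutually independent primitive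
random variables. -/
structure PrimPMF (X W V1 V2 : ℕ → Type) [Fintype (X 0)] [∀ t, Fintype (W t)]
    [∀ t, Fintype (V1 t)] [∀ t, Fintype (V2 t)] where
  pX0 : X 0 → ℝ
  pW : ∀ t, W t → ℝ
  pV1 : ∀ t, V1 t → ℝ
  pV2 : ∀ t, V2 t → ℝ
  pX0_nonneg : ∀ x, 0 ≤ pX0 x
  pX0_sum : ∑ x, pX0 x = 1
  pW_nonneg : ∀ t w, 0 ≤ pW t w
  pW_sum : ∀ t, ∑ w, pW t w = 1
  pV1_nonneg : ∀ t v, 0 ≤ pV1 t v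
  pV1_sum : ∀ t, ∑ v, pV1 t v = 1
  pV2_nonneg : ∀ t v, 0 ≤ pV2 t v
  pV2_sum : ∀ t, ∑ v, pV2 t v = 1

variable [Fintype (X 0)] [∀ t, Fintype (W t)] [∀ t, Fintype (V1 t)] [∀ t, Fintype (V2 t)]
variable [∀ t, Inhabited (W t)] [∀ t, Inhabited (V1 t)] [∀ t, Inhabited (V2 t)]

/-- Product mass of a sample point (independent primitives). -/
def mass (P : PrimPMF X W V1 V2) (T : ℕ) (ω : ΩT X W V1 V2 T) : ℝ :=
  P.pX0 ω.1 * (∏ t : Fin (T + 1), P.pW t (ω.2.1 t)) *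
    (∏ t : Fin (T + 1), P.pV1 t (ω.2.2.1 t)) * (∏ t : Fin (T + 1), P.pV2 t (ω.2.2.2 t))

/-- Elementary conditional probability `P(A | B)` on a finite sample space. -/
def condProb {Ω : Type*} [Fintype Ω] (P : Ω → ℝ) (A B : Ω → Prop) : ℝ :=
  (∑ ω, if A ω ∧ B ω then P ω else 0) / (∑ ω, if B ω then P ω else 0)

/-- Elementary conditional expectation `E[F | B]` on a finite sample space. -/
def condExp {Ω : Type*} [Fintype Ω] (P : Ω → ℝ) (F : Ω → ℝ) (B : Ω → Prop) : ℝ :=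
  (∑ ω, if B ω then P ω * F ω else 0) / (∑ ω, if B ω then P ω else 0)

/-- Agent 1's information state `Π¹_t = P(X_t = · | M¹_t)` at the realization `ω`. -/
def infoState1 (S : Sys X U1 U2 W V1 V2 Y1 Y2) (g : Strat U1 U2 Y1 Y2)
    (P : PrimPMF X W V1 V2) (T : ℕ) (ω : ΩT X W V1 V2 T) (t : ℕ) : X t → ℝ :=
  fun x => condProb (mass P T)
    (fun ω' => xTraj S g (toPrim T ω') t = x)
    (fun ω' => m1Traj S g (toPrim T ω') t = m1Traj S g (toPrim T ω) t)

/-- Agent 2's information state `Π²_t = P((X_t, L_t^{[1,2]}) = · | M²_t)` at `ω`. -/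
def infoState2 (S : Sys X U1 U2 W V1 V2 Y1 Y2) (g : Strat U1 U2 Y1 Y2)
    (P : PrimPMF X W V1 V2) (T : ℕ) (ω : ΩT X W V1 V2 T) (t : ℕ) :
    X t × Lp Y1 U1 t → ℝ :=
  fun sl => condProb (mass P T)
    (fun ω' => (xTraj S g (toPrim T ω') t, lpTraj S g (toPrim T ω') t) = sl)
    (fun ω' => m2Traj S g (toPrim T ω') t = m2Traj S g (toPrim T ω) t)

/-- Per-stage cost along the closed loop. -/
def stageCost (S : Sys X U1 U2 W V1 V2 Y1 Y2) (g : Strat U1 U2 Y1 Y2) (ρ : Prim X W V1 V2)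
    (t : ℕ) : ℝ := S.c t (xTraj S g ρ t) (u1Traj S g ρ t) (u2Traj S g ρ t)

/-- Expected cost-to-go `𝒥_{t₀}(g) = E[Σ_{t=t₀}^T c_t(X_t,U¹_t,U²_t)]`. -/
def costToGo (S : Sys X U1 U2 W V1 V2 Y1 Y2) (g : Strat U1 U2 Y1 Y2)
    (P : PrimPMF X W V1 V2) (T t0 : ℕ) : ℝ :=
  ∑ ω : ΩT X W V1 V2 T, mass P T ω * ∑ t ∈ Finset.Icc t0 T, stageCost S g (toPrim T ω) t

/-- Expected total cost `𝒥(g) = E[Σ_{t=0}^T c_t(X_t,U¹_t,U²_t)]`. -/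
def totalCost (S : Sys X U1 U2 W V1 V2 Y1 Y2) (g : Strat U1 U2 Y1 Y2)
    (P : PrimPMF X W V1 V2) (T : ℕ) : ℝ := costToGo S g P T 0

/-- `(g, ψ²)` is a compatible control/prescription pair: agent 1's action is
generated by the prescription `Γ_t^{[2,1]} = ψ_t(M²_t)` applied to `Π¹_t`. -/
def Compat (S : Sys X U1 U2 W V1 V2 Y1 Y2) (g : Strat U1 U2 Y1 Y2)
    (ψ : ∀ t, M2 Y2 U2 t → (X t → ℝ) → U1 t) (P : PrimPMF X W V1 V2) (T : ℕ) : Prop :=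
  ∀ t, t ≤ T → ∀ ω : ΩT X W V1 V2 T, 0 < mass P T ω →
    u1Traj S g (toPrim T ω) t =
      ψ t (m2Traj S g (toPrim T ω) t) (infoState1 S g P T ω t)

/-- The map `e_t` of Lemma 4: conditioning a joint distribution on
`𝒳_t × 𝓛_t^{[1,2]}` on its second component. -/
def eMap [∀ t, Fintype (X t)] (t : ℕ) (π2 : X t × Lp Y1 U1 t → ℝ) (l : Lp Y1 U1 t) :
    X t → ℝ := fun x => π2 (x, l) / ∑ x', π2 (x', l)

/-!
Given `M²`, agent 2's action is a constant `u²` and, the information being nested, agent 1's action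
is a function `γ` of `L = M¹ \ M²` alone; for a law depending on `Π¹` this is Lemma 4,
`Π¹ = e(Π², L)`. The conditional expectation of the stage cost given `M²` is therefore an explicit
function of `(Π², γ, u²)`. Splitting it along the values `l` of `L`, one minimizes over each `γ l`
separately, which gives `J¹`, and then over `u²`, which gives `J²`.
-/

theorem isLeast_range_univ_inf' {ι α : Type*} [Fintype ι] [Nonempty ι] [LinearOrder α]
    (f : ι → α) : IsLeast (Set.range f) (univ.inf' univ_nonempty f) := by
  obtain ⟨i, -, hi⟩ := exists_mem_eq_inf' univ_nonempty f
  refine ⟨⟨i, hi.symm⟩, ?_⟩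
  rintro _ ⟨j, rfl⟩
  exact inf'_le f (mem_univ j)

theorem sum_mul_sum_mul_div_sum {ι K : Type*} [Fintype ι] [Field K] [LinearOrder K]
    [IsStrictOrderedRing K] {q : ι → K} (hq : ∀ i, 0 ≤ q i) (f : ι → K) :
    (∑ i, q i) * ∑ i, f i * (q i / ∑ j, q j) = ∑ i, q i * f i := by
  rw [mul_sum]
  refine sum_congr rfl fun i _ => ?_
  have hi : ∑ j, q j = 0 → q i = 0 := fun h =>
    (sum_eq_zero_iff_of_nonneg fun j _ => hq j).1 h i (mem_univ i)
  rw [mul_left_comm, mul_div_cancel_of_imp' hi, mul_comm]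

section FiniteProbability

variable {Ω : Type*} [Fintype Ω] {p : Ω → ℝ}

theorem condProb_nonneg (hp : ∀ ω, 0 ≤ p ω) (A B : Ω → Prop) : 0 ≤ condProb p A B :=
  div_nonneg (sum_nonneg fun ω _ => ite_nonneg (hp ω) le_rfl)
    (sum_nonneg fun ω _ => ite_nonneg (hp ω) le_rfl)

theorem eq_zero_of_sum_ite_eq_zero (hp : ∀ ω, 0 ≤ p ω) {B : Ω → Prop}
    (hB : ∑ ω, (if B ω then p ω else 0) = 0) {ω : Ω} (hω : B ω) : p ω = 0 := by
  have h := (sum_eq_zero_iff_of_nonneg fun ω _ => ite_nonneg (hp ω) le_rfl).1 hB ω (mem_univ ω)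
  rwa [if_pos hω] at h

theorem condProb_and_div_condProb (hp : ∀ ω, 0 ≤ p ω) (A C B : Ω → Prop) :
    condProb p (fun ω => A ω ∧ C ω) B / condProb p C B =
      condProb p A (fun ω => C ω ∧ B ω) := by
  let Z : ℝ := ∑ ω, if B ω then p ω else 0
  have hnull : Z = 0 → ∑ ω, (if A ω ∧ C ω ∧ B ω then p ω else 0) = 0 := fun hB =>
    sum_eq_zero fun ω _ => ite_eq_right_iff.2 fun h => eq_zero_of_sum_ite_eq_zero hp hB h.2.2
  have hcancel (c : ℝ) : (∑ ω, (if A ω ∧ C ω ∧ B ω then p ω else 0)) / Z / (c / Z) =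
      (∑ ω, if A ω ∧ C ω ∧ B ω then p ω else 0) / c := by
    by_cases hB : Z = 0
    · rw [hnull hB, zero_div, zero_div, zero_div]
    · exact div_div_div_cancel_right₀ hB _ _
  simp only [condProb, and_assoc]
  convert hcancel _

theorem sum_condProb_eq_and {α : Type*} [Fintype α] (x : Ω → α) (A B : Ω → Prop) :
    ∑ a, condProb p (fun ω => x ω = a ∧ A ω) B = condProb p A B := by
  simp only [condProb, ← sum_div]
  rw [sum_comm]
  simp [and_assoc, ite_and]

theorem condExp_comp {α : Type*} [Fintype α] (y : Ω → α) (f : α → ℝ) (B : Ω → Prop) :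
    condExp p (fun ω => f (y ω)) B = ∑ a, condProb p (fun ω => y ω = a) B * f a := by
  simp only [condExp, condProb, div_mul_eq_mul_div, ← sum_div, sum_mul]
  rw [sum_comm]
  simp [ite_and]

theorem condExp_congr {F G : Ω → ℝ} {B : Ω → Prop} (h : ∀ ω, B ω → F ω = G ω) :
    condExp p F B = condExp p G B := by
  unfold condExp
  congr! 3 with ω _ hω
  rw [h ω hω]

theorem sum_mul_condExp {M : Type*} (hp : ∀ ω, 0 ≤ p ω) (m : Ω → M) (F : Ω → ℝ) :
    ∑ ω, p ω * condExp p F (fun ω' => m ω' = m ω) = ∑ ω, p ω * F ω := by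
  let Z (ω : Ω) : ℝ := ∑ ω', if m ω' = m ω then p ω' else 0
  have hswap (ω ω' : Ω) :
      p ω * ((if m ω' = m ω then p ω' * F ω' else 0) / Z ω) =
        (if m ω = m ω' then p ω else 0) * (p ω' * F ω' / Z ω') := by
    by_cases h : m ω = m ω'
    · simp [Z, h]
    · simp [h, Ne.symm h]
  have hcancel (ω : Ω) : Z ω * (p ω * F ω / Z ω) = p ω * F ω :=
    mul_div_cancel_of_imp' fun hZ => by rw [eq_zero_of_sum_ite_eq_zero hp hZ rfl, zero_mul]
  calc ∑ ω, p ω * condExp p F (fun ω' => m ω' = m ω)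
      = ∑ ω, ∑ ω', p ω * ((if m ω' = m ω then p ω' * F ω' else 0) / Z ω) := by
        simp only [condExp, sum_div, mul_sum, Z]
    _ = ∑ ω', ∑ ω, (if m ω = m ω' then p ω else 0) * (p ω' * F ω' / Z ω') := by
        simp only [hswap]
        exact sum_comm
    _ = ∑ ω, p ω * F ω := by
        simp only [← sum_mul]
        exact sum_congr rfl fun ω _ => hcancel ω

end FiniteProbability

/-- The expected stage cost under the joint belief `π2` on `(X_t, L_t^{[1,2]})` when agent 2
plays `u2` and agent 1 plays `γ l` upon private information `l`. Here `γ` is the action part of a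
prescription of agent 2 to agent 1, with `Π¹` already expressed through `l`. -/
def prescribedCost (S : Sys X U1 U2 W V1 V2 Y1 Y2) (t : ℕ) [Fintype (X t)]
    [Fintype (Lp Y1 U1 t)] (π2 : X t × Lp Y1 U1 t → ℝ) (γ : Lp Y1 U1 t → U1 t) (u2 : U2 t) : ℝ :=
  ∑ xl, π2 xl * S.c t xl.1 (γ xl.2) u2

section PrescribedCost

omit [Fintype (X 0)] [∀ t, Fintype (W t)] [∀ t, Fintype (V1 t)] [∀ t, Fintype (V2 t)]
  [∀ t, Inhabited (W t)] [∀ t, Inhabited (V1 t)] [∀ t, Inhabited (V2 t)]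

variable [∀ t, Fintype (X t)] {t : ℕ} [Fintype (Lp Y1 U1 t)] {S : Sys X U1 U2 W V1 V2 Y1 Y2}
  {J1 : (X t → ℝ) → U2 t → ℝ} {J2 : (X t × Lp Y1 U1 t → ℝ) → ℝ}

theorem prescribedCost_eq_sum_eMap {π2 : X t × Lp Y1 U1 t → ℝ} (hπ2 : ∀ xl, 0 ≤ π2 xl)
    (γ : Lp Y1 U1 t → U1 t) (u2 : U2 t) :
    prescribedCost S t π2 γ u2 =
      ∑ l, (∑ x, π2 (x, l)) * ∑ x, S.c t x (γ l) u2 * eMap t π2 l x := by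
  rw [prescribedCost, Fintype.sum_prod_type_right]
  exact sum_congr rfl fun l _ => (sum_mul_sum_mul_div_sum (fun x => hπ2 (x, l)) _).symm

theorem le_prescribedCost
    (hJ1 : ∀ π u1 u2, J1 π u2 ≤ ∑ x, S.c t x u1 u2 * π x)
    (hJ2 : ∀ π2 u2, J2 π2 ≤ ∑ l, (∑ x, π2 (x, l)) * J1 (eMap t π2 l) u2)
    {π2 : X t × Lp Y1 U1 t → ℝ} (hπ2 : ∀ xl, 0 ≤ π2 xl) (γ : Lp Y1 U1 t → U1 t) (u2 : U2 t) :
    J2 π2 ≤ prescribedCost S t π2 γ u2 :=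
  calc J2 π2 ≤ ∑ l, (∑ x, π2 (x, l)) * J1 (eMap t π2 l) u2 := hJ2 π2 u2
    _ ≤ ∑ l, (∑ x, π2 (x, l)) * ∑ x, S.c t x (γ l) u2 * eMap t π2 l x :=
        sum_le_sum fun l _ =>
          mul_le_mul_of_nonneg_left (hJ1 _ _ _) (sum_nonneg fun x _ => hπ2 (x, l))
    _ = prescribedCost S t π2 γ u2 := (prescribedCost_eq_sum_eMap hπ2 γ u2).symm

theorem prescribedCost_argmin {g1star : (X t → ℝ) → U2 t → U1 t}
    {g2star : (X t × Lp Y1 U1 t → ℝ) → U2 t}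
    (hg1 : ∀ π u2, ∑ x, S.c t x (g1star π u2) u2 * π x = J1 π u2)
    (hg2 : ∀ π2, ∑ l, (∑ x, π2 (x, l)) * J1 (eMap t π2 l) (g2star π2) = J2 π2)
    {π2 : X t × Lp Y1 U1 t → ℝ} (hπ2 : ∀ xl, 0 ≤ π2 xl) :
    prescribedCost S t π2 (fun l => g1star (eMap t π2 l) (g2star π2)) (g2star π2) = J2 π2 := by
  rw [prescribedCost_eq_sum_eMap hπ2, ← hg2]
  simp only [hg1]

end PrescribedCost

omit [∀ t, Inhabited (W t)] [∀ t, Inhabited (V1 t)] [∀ t, Inhabited (V2 t)] in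
theorem mass_nonneg (P : PrimPMF X W V1 V2) (T : ℕ) (ω : ΩT X W V1 V2 T) : 0 ≤ mass P T ω :=
  mul_nonneg (mul_nonneg (mul_nonneg (P.pX0_nonneg _) (prod_nonneg fun t _ => P.pW_nonneg t _))
    (prod_nonneg fun t _ => P.pV1_nonneg t _)) (prod_nonneg fun t _ => P.pV2_nonneg t _)

theorem infoState2_nonneg (S : Sys X U1 U2 W V1 V2 Y1 Y2) (g : Strat U1 U2 Y1 Y2)
    (P : PrimPMF X W V1 V2) (T : ℕ) (ω : ΩT X W V1 V2 T) (t : ℕ) (xl : X t × Lp Y1 U1 t) :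
    0 ≤ infoState2 S g P T ω t xl :=
  condProb_nonneg (mass_nonneg P T) _ _

theorem infoState2_congr {S : Sys X U1 U2 W V1 V2 Y1 Y2} {g : Strat U1 U2 Y1 Y2}
    {P : PrimPMF X W V1 V2} {T t : ℕ} {ω ω' : ΩT X W V1 V2 T}
    (h : m2Traj S g (toPrim T ω') t = m2Traj S g (toPrim T ω) t) :
    infoState2 S g P T ω' t = infoState2 S g P T ω t := by
  unfold infoState2
  rw [h]

section StageCost

omit [Fintype (X 0)]

variable [∀ t, Fintype (X t)]

theorem infoState1_eq_eMap (S : Sys X U1 U2 W V1 V2 Y1 Y2) (g : Strat U1 U2 Y1 Y2)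
    (P : PrimPMF X W V1 V2) (T : ℕ) (ω : ΩT X W V1 V2 T) (t : ℕ) :
    infoState1 S g P T ω t =
      eMap t (infoState2 S g P T ω t) (lpTraj S g (toPrim T ω) t) := by
  funext x
  simp only [infoState1, infoState2, eMap, m1Traj, Prod.mk.injEq]
  rw [sum_condProb_eq_and, condProb_and_div_condProb (mass_nonneg P T)]

variable {t : ℕ} [Fintype (Lp Y1 U1 t)] {S : Sys X U1 U2 W V1 V2 Y1 Y2}
  {J1 : (X t → ℝ) → U2 t → ℝ} {J2 : (X t × Lp Y1 U1 t → ℝ) → ℝ}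

theorem condExp_eq_prescribedCost (g : Strat U1 U2 Y1 Y2) (P : PrimPMF X W V1 V2) (T : ℕ)
    (ω : ΩT X W V1 V2 T) {F : ΩT X W V1 V2 T → ℝ} {γ : Lp Y1 U1 t → U1 t} {u2 : U2 t}
    (hF : ∀ ω', m2Traj S g (toPrim T ω') t = m2Traj S g (toPrim T ω) t →
      F ω' = S.c t (xTraj S g (toPrim T ω') t) (γ (lpTraj S g (toPrim T ω') t)) u2) :
    condExp (mass P T) F (fun ω' => m2Traj S g (toPrim T ω') t = m2Traj S g (toPrim T ω) t) =
      prescribedCost S t (infoState2 S g P T ω t) γ u2 :=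
  (condExp_congr hF).trans <|
    condExp_comp (fun ω' => (xTraj S g (toPrim T ω') t, lpTraj S g (toPrim T ω') t))
      (fun xl => S.c t xl.1 (γ xl.2) u2) _

theorem sum_mass_mul_le_sum_mass_mul_stageCost
    (hJ1 : ∀ π u1 u2, J1 π u2 ≤ ∑ x, S.c t x u1 u2 * π x)
    (hJ2 : ∀ π2 u2, J2 π2 ≤ ∑ l, (∑ x, π2 (x, l)) * J1 (eMap t π2 l) u2)
    (g : Strat U1 U2 Y1 Y2) (P : PrimPMF X W V1 V2) (T : ℕ) :
    ∑ ω : ΩT X W V1 V2 T, mass P T ω * J2 (infoState2 S g P T ω t) ≤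
      ∑ ω : ΩT X W V1 V2 T, mass P T ω * stageCost S g (toPrim T ω) t := by
  rw [← sum_mul_condExp (mass_nonneg P T) (fun ω => m2Traj S g (toPrim T ω) t)
    (fun ω => stageCost S g (toPrim T ω) t)]
  refine sum_le_sum fun ω _ => mul_le_mul_of_nonneg_left ?_ (mass_nonneg P T ω)
  rw [condExp_eq_prescribedCost g P T ω
    (γ := fun l => g.g1 t (l, m2Traj S g (toPrim T ω) t))
    (u2 := g.g2 t (m2Traj S g (toPrim T ω) t))]
  · exact le_prescribedCost hJ1 hJ2 (infoState2_nonneg S g P T ω t) _ _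
  · intro ω' h
    simp only [stageCost, u1Traj, u2Traj, m1Traj, h]

theorem sum_mass_mul_cost_argmin {g1star : (X t → ℝ) → U2 t → U1 t}
    {g2star : (X t × Lp Y1 U1 t → ℝ) → U2 t}
    (hg1 : ∀ π u2, ∑ x, S.c t x (g1star π u2) u2 * π x = J1 π u2)
    (hg2 : ∀ π2, ∑ l, (∑ x, π2 (x, l)) * J1 (eMap t π2 l) (g2star π2) = J2 π2)
    (g : Strat U1 U2 Y1 Y2) (P : PrimPMF X W V1 V2) (T : ℕ) :
    ∑ ω : ΩT X W V1 V2 T, mass P T ω *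
        S.c t (xTraj S g (toPrim T ω) t)
          (g1star (infoState1 S g P T ω t) (g2star (infoState2 S g P T ω t)))
          (g2star (infoState2 S g P T ω t)) =
      ∑ ω : ΩT X W V1 V2 T, mass P T ω * J2 (infoState2 S g P T ω t) := by
  rw [← sum_mul_condExp (mass_nonneg P T) (fun ω => m2Traj S g (toPrim T ω) t)]
  refine sum_congr rfl fun ω _ => congrArg (mass P T ω * ·) ?_
  rw [← prescribedCost_argmin hg1 hg2 (infoState2_nonneg S g P T ω t)]
  refine condExp_eq_prescribedCost g P T ω fun ω' h => ?_
  rw [infoState1_eq_eMap, infoState2_congr h]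

end StageCost

omit [Fintype (X 0)] in
theorem terminal_DP_agent2_general [∀ t, Fintype (X t)] (T t : ℕ) [Fintype (Lp Y1 U1 t)]
    (S : Sys X U1 U2 W V1 V2 Y1 Y2) (P : PrimPMF X W V1 V2)
    (J1 : (X t → ℝ) → U2 t → ℝ)
    (hJ1 : ∀ π u2, IsLeast (Set.range fun u1 => ∑ x, S.c t x u1 u2 * π x) (J1 π u2))
    (J2 : (X t × Lp Y1 U1 t → ℝ) → ℝ)
    (hJ2 : ∀ π2, IsLeast
      (Set.range fun u2 => ∑ l, (∑ x, π2 (x, l)) * J1 (eMap t π2 l) u2) (J2 π2))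
    (g : Strat U1 U2 Y1 Y2) :
    ∑ ω : ΩT X W V1 V2 T, mass P T ω * J2 (infoState2 S g P T ω t) ≤
        ∑ ω : ΩT X W V1 V2 T, mass P T ω * stageCost S g (toPrim T ω) t ∧
      ∃ (g1star : (X t → ℝ) → U2 t → U1 t) (g2star : (X t × Lp Y1 U1 t → ℝ) → U2 t),
        (∀ π u2, ∑ x, S.c t x (g1star π u2) u2 * π x = J1 π u2) ∧
        (∀ π2, ∑ l, (∑ x, π2 (x, l)) * J1 (eMap t π2 l) (g2star π2) = J2 π2) ∧
        ∑ ω : ΩT X W V1 V2 T, mass P T ω *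
            S.c t (xTraj S g (toPrim T ω) t)
              (g1star (infoState1 S g P T ω t) (g2star (infoState2 S g P T ω t)))
              (g2star (infoState2 S g P T ω t)) =
          ∑ ω : ΩT X W V1 V2 T, mass P T ω * J2 (infoState2 S g P T ω t) := by
  choose g1star hg1 using fun π u2 => (hJ1 π u2).1
  choose g2star hg2 using fun π2 => (hJ2 π2).1
  refine ⟨?_, g1star, g2star, hg1, hg2, sum_mass_mul_cost_argmin hg1 hg2 g P T⟩
  exact sum_mass_mul_le_sum_mass_mul_stageCost (fun π u1 u2 => (hJ1 π u2).2 ⟨u1, rfl⟩)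
    (fun π2 u2 => (hJ2 π2).2 ⟨u2, rfl⟩) g P T

/-- Lemma 11 of the paper. With the time-`T` value functions
`J¹_T(π¹, u²) := min_{u¹} Σ_x c_T(x,u¹,u²)·π¹(x)` and
`J²_T(π²) := min_{u²} E[J¹_T(Π¹_T, u²) | Π²_T = π², U²_T = u²]`
(by Lemma 4 the inner conditional expectation equals
`Σ_l (Σ_x π²(x,l)) · J¹_T(e_T(π², l), u²)`):
(1) for every admissible team strategy of the structural form the expected
terminal cost satisfies `𝒥_T(g) ≥ E[J²_T(Π²_T)]`; and (2) the argmin laws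
`g1star`, `g2star` achieve equality. -/
theorem terminal_DP_agent2
    [∀ t, Fintype (X t)] [∀ t, Fintype (U1 t)] [∀ t, Fintype (U2 t)]
    [∀ t, Fintype (Y1 t)] [∀ t, Fintype (Y2 t)]
    [∀ t, Nonempty (U1 t)] [∀ t, Nonempty (U2 t)]
    (T : ℕ) (S : Sys X U1 U2 W V1 V2 Y1 Y2) (P : PrimPMF X W V1 V2)
    (J1T : (X T → ℝ) → U2 T → ℝ)
    (hJ1T : ∀ (π : X T → ℝ) (u2 : U2 T),
      J1T π u2 = Finset.univ.inf' Finset.univ_nonempty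
        (fun u1 : U1 T => ∑ x, S.c T x u1 u2 * π x))
    (J2T : (X T × Lp Y1 U1 T → ℝ) → ℝ)
    (hJ2T : ∀ π2 : X T × Lp Y1 U1 T → ℝ,
      J2T π2 = Finset.univ.inf' Finset.univ_nonempty
        (fun u2 : U2 T => ∑ l : Lp Y1 U1 T, (∑ x, π2 (x, l)) * J1T (eMap T π2 l) u2)) :
    ∀ (g : Strat U1 U2 Y1 Y2)
      (φ1 : ∀ t, (X t → ℝ) → (X t × Lp Y1 U1 t → ℝ) → U1 t)
      (φ1T : (X T → ℝ) → (X T × Lp Y1 U1 T → ℝ) → U2 T → U1 T)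
      (φ2 : ∀ t, (X t × Lp Y1 U1 t → ℝ) → U2 t),
      (∀ t, t < T → ∀ ω : ΩT X W V1 V2 T, 0 < mass P T ω →
        u1Traj S g (toPrim T ω) t =
          φ1 t (infoState1 S g P T ω t) (infoState2 S g P T ω t)) →
      (∀ ω : ΩT X W V1 V2 T, 0 < mass P T ω →
        u1Traj S g (toPrim T ω) T =
          φ1T (infoState1 S g P T ω T) (infoState2 S g P T ω T)
            (u2Traj S g (toPrim T ω) T)) →
      (∀ t, t ≤ T → ∀ ω : ΩT X W V1 V2 T, 0 < mass P T ω →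
        u2Traj S g (toPrim T ω) t = φ2 t (infoState2 S g P T ω t)) →
      -- (1) lower bound on the expected terminal-stage cost
      ((∑ ω : ΩT X W V1 V2 T, mass P T ω * stageCost S g (toPrim T ω) T) ≥
        ∑ ω : ΩT X W V1 V2 T, mass P T ω * J2T (infoState2 S g P T ω T)) ∧
      -- (2) equality for the argmin laws of both agents at time T
      (∃ (g1star : (X T → ℝ) → U2 T → U1 T)
         (g2star : (X T × Lp Y1 U1 T → ℝ) → U2 T),
        (∀ (π : X T → ℝ) (u2 : U2 T),
          (∑ x, S.c T x (g1star π u2) u2 * π x) = J1T π u2) ∧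
        (∀ π2 : X T × Lp Y1 U1 T → ℝ,
          (∑ l : Lp Y1 U1 T, (∑ x, π2 (x, l)) * J1T (eMap T π2 l) (g2star π2)) =
            J2T π2) ∧
        (∑ ω : ΩT X W V1 V2 T, mass P T ω *
            S.c T (xTraj S g (toPrim T ω) T)
              (g1star (infoState1 S g P T ω T) (g2star (infoState2 S g P T ω T)))
              (g2star (infoState2 S g P T ω T))) =
          ∑ ω : ΩT X W V1 V2 T, mass P T ω * J2T (infoState2 S g P T ω T)) := by
  intro g _ _ _ _ _ _
  exact terminal_DP_agent2_general T T S P J1T (fun π u2 => hJ1T π u2 ▸ isLeast_range_univ_inf' _)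
    J2T (fun π2 => hJ2T π2 ▸ isLeast_range_univ_inf' _) g

end

end NestedTeam
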